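/- arXiv:1602.06445 — 4 statements merged into one kernel-verified Lean document; each statement's English description precedes it below -/
import Mathlib

section
/- For every real number z, one has z·e^{z²}·∫_0^z e^{−t²} dt = ∑_{k=0}^∞ z^{2k+2}/(3/2)_k = ∑_{k=0}^∞ 4^k · k! · z^{2k+2} / (2k+1)!, i.e. this function equals z²·₁F₁(1, 3/2; z²). -/
/-!
Substituting `t = z u` turns `e^{z²} ∫_0^z e^{-t²} dt` into `z ∫_0^1 e^{z² (1 - u²)} du`. Expanding
the exponential and integrating term by term leaves the beta integrals `∫_0^1 (1 - u²)^k du`, whose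
value `k! / (3/2)_k` follows from a one-step recursion in `k`. The argument is the same with any
positive exponent `m` in place of `2`, and `1 + 1/m` in place of `3/2`.
-/

open Real

section

open scoped Nat

theorem hasSum_intervalIntegral_exp {𝔸 : Type*} [NormedRing 𝔸] [NormedAlgebra ℝ 𝔸]
    [CompleteSpace 𝔸] {g : ℝ → 𝔸} (hg : Continuous g) (a b : ℝ) :
    HasSum (fun k : ℕ ↦ (k ! : ℝ)⁻¹ • ∫ t in a..b, g t ^ k)
      (∫ t in a..b, NormedSpace.exp (g t)) := by
  let G : C(ℝ, 𝔸) := ⟨g, hg⟩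
  let K : TopologicalSpace.Compacts ℝ := ⟨Set.uIcc a b, isCompact_uIcc⟩
  have summable_norm : Summable fun k : ℕ ↦ ‖((k ! : ℝ)⁻¹ • G ^ k).restrict K‖ :=
    (NormedSpace.norm_expSeries_summable' (𝕂 := ℝ) (G.restrict K)).congr fun k ↦
      congrArg norm (ContinuousMap.ext fun _ ↦ rfl)
  have sum_eq_exp (t : ℝ) : ∑' k : ℕ, (k ! : ℝ)⁻¹ • g t ^ k = NormedSpace.exp (g t) :=
    (NormedSpace.exp_series_hasSum_exp' (g t)).tsum_eq
  have hasSum := intervalIntegral.hasSum_intervalIntegral_of_summable_norm summable_norm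
  simpa only [ContinuousMap.smul_apply, ContinuousMap.pow_apply, G, ContinuousMap.coe_mk,
    intervalIntegral.integral_smul, sum_eq_exp] using hasSum

theorem integral_one_sub_pow_pow_succ (m k : ℕ) :
    (1 + m * (k + 1)) * ∫ u in (0 : ℝ)..1, (1 - u ^ m) ^ (k + 1) =
      m * (k + 1) * ∫ u in (0 : ℝ)..1, (1 - u ^ m) ^ k := by
  have deriv_antideriv (u : ℝ) : HasDerivAt (fun u : ℝ ↦ u * (1 - u ^ m) ^ (k + 1))
      ((1 + m * (k + 1)) * (1 - u ^ m) ^ (k + 1) - m * (k + 1) * (1 - u ^ m) ^ k) u := by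
    refine ((hasDerivAt_id u).mul (((hasDerivAt_pow m u).const_sub 1).pow (k + 1))).congr_deriv ?_
    have mul_pow_pred : (m : ℝ) * (u * u ^ (m - 1)) = m * u ^ m := by
      cases m with
      | zero => simp
      | succ m => rw [Nat.add_sub_cancel, pow_succ']
    simp only [id_eq, Pi.pow_apply, Nat.add_sub_cancel]
    push_cast
    linear_combination -(k + 1) * (1 - u ^ m) ^ k * mul_pow_pred
  have integral_deriv := intervalIntegral.integral_eq_sub_of_hasDerivAt
    (fun u _ ↦ deriv_antideriv u) (Continuous.intervalIntegrable (by fun_prop) 0 1)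
  rw [intervalIntegral.integral_sub (Continuous.intervalIntegrable (by fun_prop) _ _)
    (Continuous.intervalIntegrable (by fun_prop) _ _), intervalIntegral.integral_const_mul,
    intervalIntegral.integral_const_mul] at integral_deriv
  simpa [sub_eq_zero] using integral_deriv

theorem integral_one_sub_pow_pow {m : ℕ} (hm : m ≠ 0) (k : ℕ) :
    ∫ u in (0 : ℝ)..1, (1 - u ^ m) ^ k =
      k ! / (ascPochhammer ℝ k).eval (1 + 1 / m : ℝ) := by
  have pochhammer_ne_zero (k : ℕ) : (ascPochhammer ℝ k).eval (1 + 1 / m : ℝ) ≠ 0 :=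
    (ascPochhammer_pos k _ (by positivity)).ne'
  induction k with
  | zero => simp
  | succ k ih =>
    have recursion := integral_one_sub_pow_pow_succ m k
    have hk := pochhammer_ne_zero k
    rw [eq_div_iff (pochhammer_ne_zero (k + 1)), ascPochhammer_succ_eval, Nat.factorial_succ]
    rw [ih] at recursion
    generalize (ascPochhammer ℝ k).eval (1 + 1 / m : ℝ) = p at recursion hk ⊢
    field_simp at recursion ⊢
    push_cast
    linear_combination recursion

theorem hasSum_integral_exp_mul_one_sub_pow {m : ℕ} (hm : m ≠ 0) (x : ℝ) :
    HasSum (fun k : ℕ ↦ x ^ k / (ascPochhammer ℝ k).eval (1 + 1 / m : ℝ))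
      (∫ u in (0 : ℝ)..1, exp (x * (1 - u ^ m))) := by
  rw [exp_eq_exp_ℝ]
  refine (hasSum_intervalIntegral_exp (by fun_prop) 0 1).congr_fun fun k ↦ ?_
  simp only [mul_pow, intervalIntegral.integral_const_mul, integral_one_sub_pow_pow hm, smul_eq_mul]
  field_simp

theorem exp_pow_mul_integral_exp_neg_pow (m : ℕ) (z : ℝ) :
    exp (z ^ m) * ∫ t in (0 : ℝ)..z, exp (-t ^ m) =
      z * ∫ u in (0 : ℝ)..1, exp (z ^ m * (1 - u ^ m)) :=
  calc
    _ = exp (z ^ m) * (z * ∫ u in (0 : ℝ)..1, exp (-(z * u) ^ m)) := by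
      rw [intervalIntegral.mul_integral_comp_mul_left (f := fun t ↦ exp (-t ^ m)), mul_zero,
        mul_one]
    _ = z * ∫ u in (0 : ℝ)..1, exp (z ^ m) * exp (-(z * u) ^ m) := by
      rw [intervalIntegral.integral_const_mul, mul_left_comm]
    _ = z * ∫ u in (0 : ℝ)..1, exp (z ^ m * (1 - u ^ m)) := by
      congr! 3 with u
      rw [← exp_add]
      ring_nf

theorem hasSum_exp_pow_mul_integral_exp_neg_pow {m : ℕ} (hm : m ≠ 0) (z : ℝ) :
    HasSum (fun k : ℕ ↦ z ^ (m * k + 1) / (ascPochhammer ℝ k).eval (1 + 1 / m : ℝ))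
      (exp (z ^ m) * ∫ t in (0 : ℝ)..z, exp (-t ^ m)) := by
  rw [exp_pow_mul_integral_exp_neg_pow]
  simpa only [← pow_mul, mul_div_assoc', ← pow_succ'] using
    (hasSum_integral_exp_mul_one_sub_pow hm (z ^ m)).mul_left z

theorem ascPochhammer_eval_three_halves_mul {R : Type*} [Field R] [NeZero (2 : R)] (k : ℕ) :
    (ascPochhammer R k).eval (3 / 2 : R) * (4 ^ k * k !) = (2 * k + 1)! := by
  induction k with
  | zero => simp
  | succ k ih =>
    have factorial_step :
        ((2 * (k + 1) + 1)! : R) = (2 * k + 3) * (2 * k + 2) * (2 * k + 1)! := by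
      rw [show 2 * (k + 1) + 1 = 2 * k + 1 + 1 + 1 by ring, Nat.factorial_succ, Nat.factorial_succ]
      push_cast
      ring
    rw [factorial_step, ← ih, ascPochhammer_succ_eval, Nat.factorial_succ]
    push_cast
    field_simp
    ring

end

/-- **A hypergeometric expansion of `z e^{z²} ∫_0^z e^{-t²} dt`.**
For every real `z`,
`z e^{z²} ∫_0^z e^{-t²} dt = ∑ₖ z^{2k+2}/(3/2)ₖ = ∑ₖ 4^k k! z^{2k+2}/(2k+1)!`,
i.e. this function equals `z² ·₁F₁(1, 3/2; z²)`. -/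
theorem mul_exp_sq_integral_eq_tsum (z : ℝ) :
    (z * Real.exp (z ^ 2) * ∫ t in (0:ℝ)..z, Real.exp (-t ^ 2))
        = ∑' k : ℕ, z ^ (2 * k + 2) / (ascPochhammer ℝ k).eval (3 / 2 : ℝ) ∧
    (z * Real.exp (z ^ 2) * ∫ t in (0:ℝ)..z, Real.exp (-t ^ 2))
        = ∑' k : ℕ, (4 : ℝ) ^ k * (Nat.factorial k) * z ^ (2 * k + 2)
            / (Nat.factorial (2 * k + 1)) := by
  have pochhammer_series :
      HasSum (fun k : ℕ ↦ z ^ (2 * k + 2) / (ascPochhammer ℝ k).eval (3 / 2 : ℝ))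
        (z * exp (z ^ 2) * ∫ t in (0 : ℝ)..z, exp (-t ^ 2)) := by
    have one_add_half : (1 + 1 / (2 : ℕ) : ℝ) = 3 / 2 := by norm_num
    simpa only [one_add_half, mul_div_assoc', ← pow_succ', mul_assoc] using
      (hasSum_exp_pow_mul_integral_exp_neg_pow two_ne_zero z).mul_left z
  have term_eq (k : ℕ) : z ^ (2 * k + 2) / (ascPochhammer ℝ k).eval (3 / 2 : ℝ) =
      4 ^ k * k.factorial * z ^ (2 * k + 2) / (2 * k + 1).factorial := by
    rw [← ascPochhammer_eval_three_halves_mul, mul_comm ((ascPochhammer ℝ k).eval _),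
      mul_div_mul_left _ _ (by positivity)]
  exact ⟨pochhammer_series.tsum_eq.symm,
    pochhammer_series.tsum_eq.symm.trans (tsum_congr term_eq)⟩
end

section
/- For every real number t and every integer n ≥ 1, the sequence B_n(t) satisfies the linear three-term recurrence (n+1)·B_{n+1}(t) − (2n+1)(2+t)·B_n(t) + n·t²·B_{n−1}(t) = 0. -/
/-!
Since `Bₙ(t) = tⁿ Pₙ(1 + 2/t)` with `Pₙ` the Legendre polynomial, the recurrence is Bonnet's
`(n+2) Pₙ₊₂(x) = (2n+3) x Pₙ₊₁(x) - (n+1) Pₙ(x)` at `x = 1 + 2/t`, cleared of denominators.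
Comparing coefficients, each of the numbers `C(m,k+1) C(m+k+1,k+1)` with `m = n, n+1, n+2` is, up
to the common factor `(k+1)²`, a polynomial multiple of the single number `C(n+1,k) C(n+1+k,k)`,
so that the recurrence becomes a polynomial identity in `n` and `k`.
-/

open Finset

/-- `Bₙ(t) = ∑_{k=0}^n C(n,k) C(n+k,k) t^{n−k}`. -/
noncomputable def Blog (t : ℝ) (n : ℕ) : ℝ :=
  ∑ k ∈ range (n + 1), (Nat.choose n k : ℝ) * (Nat.choose (n + k) k : ℝ) * t ^ (n - k)

/-- The coefficient of `x ^ k` in the Legendre polynomial `Pₙ(1 + 2x)`; it is zero for `k > n`. -/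
def legendreCoeff (n k : ℕ) : ℕ :=
  n.choose k * (n + k).choose k

/-- The homogenized Legendre polynomial `tⁿ Pₙ(1 + 2/t)`, written without division so that it
makes sense in every commutative semiring, also at `t = 0`. -/
def homogLegendre {R : Type*} [CommSemiring R] (t : R) (n : ℕ) : R :=
  ∑ k ∈ range (n + 1), (legendreCoeff n k : R) * t ^ (n - k)

theorem cast_choose_succ_right_eq {R : Type*} [Ring R] (n k : ℕ) :
    (n.choose (k + 1) : R) * (k + 1) = n.choose k * (n - k) := by
  obtain hk | hk := le_or_gt k n
  · rw [← Nat.cast_sub hk]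
    exact_mod_cast congrArg (Nat.cast (R := R)) (n.choose_succ_right_eq k)
  · simp [Nat.choose_eq_zero_of_lt hk, Nat.choose_eq_zero_of_lt (hk.trans k.lt_succ_self)]

theorem cast_choose_mul_succ_eq {R : Type*} [Ring R] (n k : ℕ) :
    (n.choose k : R) * (n + 1) = (n + 1).choose k * (n + 1 - k) := by
  rw [← Nat.cast_succ, ← cast_choose_succ_right_eq (n + 1) k]
  exact_mod_cast congrArg (Nat.cast (R := R))
    ((mul_comm _ _).trans (n.add_one_mul_choose_eq k))

@[simp]
theorem legendreCoeff_zero_right (n : ℕ) : legendreCoeff n 0 = 1 := by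
  simp [legendreCoeff]

theorem legendreCoeff_eq_zero_of_lt {n k : ℕ} (h : n < k) : legendreCoeff n k = 0 := by
  rw [legendreCoeff, Nat.choose_eq_zero_of_lt h, zero_mul]

theorem succ_sq_mul_legendreCoeff_succ_right (n k : ℕ) :
    ((k : ℤ) + 1) ^ 2 * legendreCoeff n (k + 1) = (n + k + 1) * (n - k) * legendreCoeff n k := by
  have choose_left : (n.choose (k + 1) : ℤ) * (k + 1) = n.choose k * (n - k) :=
    cast_choose_succ_right_eq n k
  have choose_right : ((n : ℤ) + k + 1) * (n + k).choose k =
      (n + k + 1).choose (k + 1) * (k + 1) := by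
    exact_mod_cast (n + k).add_one_mul_choose_eq k
  simp only [legendreCoeff, ← add_assoc, Nat.cast_mul]
  linear_combination (k + 1) * (n + k + 1).choose (k + 1) * choose_left -
    n.choose k * (n - k) * choose_right

theorem sub_mul_legendreCoeff_succ_left (n k : ℕ) :
    ((n : ℤ) + 1 - k) * legendreCoeff (n + 1) k = (n + k + 1) * legendreCoeff n k := by
  have choose_left : (n.choose k : ℤ) * (n + 1) = (n + 1).choose k * (n + 1 - k) :=
    cast_choose_mul_succ_eq n k
  have choose_right : ((n + k).choose k : ℤ) * (n + k + 1) = (n + 1 + k).choose k * (n + 1) := by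
    rw [Nat.add_right_comm n 1 k]
    convert cast_choose_mul_succ_eq (R := ℤ) (n + k) k using 2 <;> push_cast <;> ring
  simp only [legendreCoeff, Nat.cast_mul]
  linear_combination -(n + 1 + k).choose k * choose_left - n.choose k * choose_right

theorem succ_sq_mul_legendreCoeff_succ_succ (n k : ℕ) :
    ((k : ℤ) + 1) ^ 2 * legendreCoeff (n + 1) (k + 1) =
      (n + k + 1) * (n + k + 2) * legendreCoeff n k := by
  have right_step := succ_sq_mul_legendreCoeff_succ_right (n + 1) k
  have left_step := sub_mul_legendreCoeff_succ_left n k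
  push_cast at right_step
  linear_combination right_step + (n + k + 2) * left_step

theorem legendreCoeff_recurrence (n k : ℕ) :
    (n + 2) * legendreCoeff (n + 2) (k + 1) + (n + 1) * legendreCoeff n (k + 1) =
      (2 * n + 3) * (2 * legendreCoeff (n + 1) k + legendreCoeff (n + 1) (k + 1)) := by
  have hk : ((k : ℤ) + 1) ^ 2 ≠ 0 := by positivity
  have upper := succ_sq_mul_legendreCoeff_succ_succ (n + 1) k
  have middle := succ_sq_mul_legendreCoeff_succ_right (n + 1) k
  have lower : ((k : ℤ) + 1) ^ 2 * legendreCoeff n (k + 1) =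
      (n - k) * (n + 1 - k) * legendreCoeff (n + 1) k := by
    linear_combination succ_sq_mul_legendreCoeff_succ_right n k -
      (n - k) * sub_mul_legendreCoeff_succ_left n k
  zify
  apply mul_left_cancel₀ hk
  push_cast at upper middle
  linear_combination (n + 2) * upper - (2 * n + 3) * middle + (n + 1) * lower

theorem pow_mul_homogLegendre {R : Type*} [CommSemiring R] (t : R) (n a : ℕ) :
    t ^ a * homogLegendre t n =
      ∑ k ∈ range (n + a + 1), (legendreCoeff n k : R) * t ^ (n + a - k) := by
  have hsub : range (n + 1) ⊆ range (n + a + 1) := range_subset_range.mpr (by omega)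
  rw [homogLegendre, mul_sum, ← sum_subset hsub]
  · refine sum_congr rfl fun k hk ↦ ?_
    rw [Nat.sub_add_comm (mem_range_succ_iff.mp hk), pow_add]
    ring
  · intro k _ hk
    rw [legendreCoeff_eq_zero_of_lt (by simpa using hk), Nat.cast_zero, zero_mul]

theorem pow_mul_homogLegendre_eq_sum_succ_add {R : Type*} [CommSemiring R] (t : R) (n a : ℕ) :
    t ^ a * homogLegendre t n =
      ∑ k ∈ range (n + a), (legendreCoeff n (k + 1) : R) * t ^ (n + a - (k + 1)) +
        t ^ (n + a) := by
  rw [pow_mul_homogLegendre, sum_range_succ', legendreCoeff_zero_right, Nat.cast_one, one_mul,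
    Nat.sub_zero]

theorem sum_legendreCoeff_recurrence {R : Type*} [CommSemiring R] (s : Finset ℕ) (f : ℕ → R)
    (n : ℕ) :
    ((n : R) + 2) * ∑ k ∈ s, (legendreCoeff (n + 2) (k + 1) : R) * f k +
        (n + 1) * ∑ k ∈ s, (legendreCoeff n (k + 1) : R) * f k =
      (2 * n + 3) * (2 * ∑ k ∈ s, (legendreCoeff (n + 1) k : R) * f k +
        ∑ k ∈ s, (legendreCoeff (n + 1) (k + 1) : R) * f k) := by
  simp only [mul_sum, ← sum_add_distrib]
  refine sum_congr rfl fun k _ ↦ ?_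
  have coeff := congrArg (Nat.cast (R := R)) (legendreCoeff_recurrence n k)
  push_cast at coeff
  rw [← mul_assoc, ← mul_assoc, ← add_mul, coeff]
  ring

theorem Blog_recurrence_general {R : Type*} [CommSemiring R] (t : R) (n : ℕ) :
    ((n : R) + 2) * homogLegendre t (n + 2) + (n + 1) * t ^ 2 * homogLegendre t n =
      (2 * n + 3) * (2 + t) * homogLegendre t (n + 1) := by
  let tail (m : ℕ) : R := ∑ k ∈ range (n + 2), (legendreCoeff m (k + 1) : R) * t ^ (n + 1 - k)
  have upper : homogLegendre t (n + 2) = tail (n + 2) + t ^ (n + 2) := by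
    simpa using pow_mul_homogLegendre_eq_sum_succ_add t (n + 2) 0
  have middle : t * homogLegendre t (n + 1) = tail (n + 1) + t ^ (n + 2) := by
    simpa using pow_mul_homogLegendre_eq_sum_succ_add t (n + 1) 1
  have lower : t ^ 2 * homogLegendre t n = tail n + t ^ (n + 2) := by
    simpa using pow_mul_homogLegendre_eq_sum_succ_add t n 2
  have tails : ((n : R) + 2) * tail (n + 2) + (n + 1) * tail n =
      (2 * n + 3) * (2 * homogLegendre t (n + 1) + tail (n + 1)) :=
    sum_legendreCoeff_recurrence (range (n + 2)) (fun k ↦ t ^ (n + 1 - k)) n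
  calc ((n : R) + 2) * homogLegendre t (n + 2) + (n + 1) * t ^ 2 * homogLegendre t n
    _ = ((n + 2) * tail (n + 2) + (n + 1) * tail n) + (2 * n + 3) * t ^ (n + 2) := by
      rw [upper, mul_assoc _ (t ^ 2), lower]
      ring
    _ = (2 * n + 3) * (2 * homogLegendre t (n + 1) + (tail (n + 1) + t ^ (n + 2))) := by
      rw [tails]
      ring
    _ = (2 * n + 3) * (2 + t) * homogLegendre t (n + 1) := by
      rw [← middle]
      ring

theorem Blog_eq_homogLegendre (t : ℝ) (n : ℕ) : Blog t n = homogLegendre t n := by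
  simp only [Blog, homogLegendre, legendreCoeff, Nat.cast_mul]

/-- **Three-term recurrence for `Bₙ(t)`.**
For every real `t` and every `n ≥ 1`,
`(n+1) B_{n+1}(t) − (2n+1)(2+t) Bₙ(t) + n t² B_{n−1}(t) = 0`. -/
theorem Blog_recurrence (t : ℝ) (n : ℕ) (hn : 1 ≤ n) :
    ((n : ℝ) + 1) * Blog t (n + 1) - (2 * (n : ℝ) + 1) * (2 + t) * Blog t n
      + (n : ℝ) * t ^ 2 * Blog t (n - 1) = 0 := by
  obtain ⟨m, rfl⟩ := Nat.exists_eq_add_of_le' hn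
  simp only [Blog_eq_homogLegendre, Nat.add_sub_cancel, Nat.cast_add, Nat.cast_one]
  linear_combination Blog_recurrence_general t m
end

section
/- For every integer n ≥ 1, ∑_{k=0}^n C(n,k)·C(n+k,k)·(−1)^k/(k+1) = 0. -/
open Finset

/-!
Absorption, `C(n,k) / (k+1) = C(n+1,k+1) / (n+1)`, turns the sum into `± 1 / (n+1)` times an
`(n+1)`-st forward difference of `x ↦ C(x,n)` based at `n - 1`, with only the term `C(n-1,n) = 0`
missing. The difference vanishes because `C(x,n)` is a polynomial in `x` of degree `n`.
-/

lemma fwdDiff_iter_choose_eq_zero_of_lt {j m : ℕ} (h : j < m) :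
    (fwdDiff 1)^[m] (fun x ↦ x.choose j : ℕ → ℤ) = 0 := by
  obtain ⟨d, rfl⟩ := Nat.exists_eq_add_of_lt h
  have hconst : (fwdDiff 1)^[j] (fun x ↦ x.choose j : ℕ → ℤ) = fun _ ↦ 1 := by
    simpa only [add_zero, Nat.choose_zero_right, Nat.cast_one] using fwdDiff_iter_choose 0 j
  rw [show j + d + 1 = d + 1 + j by ring, Function.iterate_add_apply, hconst,
    Function.iterate_succ_apply, fwdDiff_const]
  exact Function.iterate_fixed (fwdDiff_const 1 0) d

lemma sum_neg_one_pow_mul_choose_mul_choose_add_eq_zero {j m : ℕ} (h : j < m) (a : ℕ) :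
    ∑ i ∈ range (m + 1), (-1 : ℤ) ^ i * m.choose i * (a + i).choose j = 0 := by
  have hdiff := congrFun (fwdDiff_iter_choose_eq_zero_of_lt h) a
  rw [fwdDiff_iter_eq_sum_shift] at hdiff
  calc ∑ i ∈ range (m + 1), (-1 : ℤ) ^ i * m.choose i * (a + i).choose j
    _ = (-1) ^ m * ∑ i ∈ range (m + 1),
          ((-1 : ℤ) ^ (m - i) * m.choose i) • ((a + i • 1).choose j : ℤ) := by
      rw [mul_sum]
      refine sum_congr rfl fun i hi ↦ ?_
      have hsign : (-1 : ℤ) ^ i = (-1) ^ m * (-1) ^ (m - i) := by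
        obtain ⟨d, rfl⟩ := Nat.exists_eq_add_of_le (mem_range_succ_iff.mp hi)
        rw [Nat.add_sub_cancel_left, pow_add, mul_assoc, ← mul_pow, neg_one_mul, neg_neg, one_pow,
          mul_one]
      rw [hsign, smul_eq_mul, smul_eq_mul, mul_one]
      ring
    _ = 0 := by rw [hdiff, Pi.zero_apply, mul_zero]

lemma sum_neg_one_pow_mul_choose_add_one_mul_choose_add {j m : ℕ} (h : j ≤ m) (a : ℕ) :
    ∑ k ∈ range (m + 1), (-1 : ℤ) ^ k * (m + 1).choose (k + 1) * (a + 1 + k).choose j =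
      a.choose j := by
  have hsum := sum_neg_one_pow_mul_choose_mul_choose_add_eq_zero (Nat.lt_succ_of_le h) a
  rw [sum_range_succ'] at hsum
  simp only [pow_succ, mul_neg_one, neg_mul, sum_neg_distrib, pow_zero, Nat.choose_zero_right,
    Nat.cast_one, one_mul, add_zero] at hsum
  simp only [add_right_comm a 1, add_assoc a _ 1]
  linarith

section Field

variable {K : Type*} [Field K] [CharZero K]

lemma choose_div_add_one (m k : ℕ) :
    (m.choose k : K) / (k + 1) = (m + 1).choose (k + 1) / (m + 1) := by
  rw [div_eq_div_iff (Nat.cast_add_one_ne_zero k) (Nat.cast_add_one_ne_zero m), mul_comm]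
  exact_mod_cast Nat.add_one_mul_choose_eq m k

theorem sum_choose_mul_choose_add_mul_neg_one_pow_div_add_one {j m : ℕ} (h : j ≤ m) (a : ℕ) :
    ∑ k ∈ range (m + 1), (m.choose k : K) * (a + 1 + k).choose j * (-1) ^ k / (k + 1) =
      a.choose j / (m + 1) := by
  calc ∑ k ∈ range (m + 1), (m.choose k : K) * (a + 1 + k).choose j * (-1) ^ k / (k + 1)
    _ = ∑ k ∈ range (m + 1),
          (-1) ^ k * ((m + 1).choose (k + 1) : K) * (a + 1 + k).choose j / (m + 1) :=
      sum_congr rfl fun k _ ↦ by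
        linear_combination (-1) ^ k * ((a + 1 + k).choose j : K) * choose_div_add_one (K := K) m k
    _ = a.choose j / (m + 1) := by
      rw [← sum_div]
      congr 1
      exact_mod_cast congrArg (Int.cast : ℤ → K)
        (sum_neg_one_pow_mul_choose_add_one_mul_choose_add h a)

theorem binomial_sum_eq_zero_general {n : ℕ} (hn : 1 ≤ n) :
    ∑ k ∈ range (n + 1), (n.choose k : K) * (n + k).choose k * (-1) ^ k / (k + 1) = 0 := by
  have hsum := sum_choose_mul_choose_add_mul_neg_one_pow_div_add_one (K := K) (le_refl n) (n - 1)
  rw [Nat.sub_add_cancel hn, Nat.choose_eq_zero_of_lt (Nat.sub_one_lt_of_lt hn),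
    Nat.cast_zero, zero_div] at hsum
  simpa only [← Nat.choose_symm_add] using hsum

end Field

/-- **A vanishing binomial sum (Vandermonde's theorem for `₂F₁(n+1,−n;2;1)`).**
For every integer `n ≥ 1`, `∑_{k=0}^n C(n,k) C(n+k,k) (−1)^k/(k+1) = 0`. -/
theorem binomial_sum_eq_zero (n : ℕ) (hn : 1 ≤ n) :
    ∑ k ∈ range (n + 1),
      (Nat.choose n k : ℝ) * (Nat.choose (n + k) k : ℝ) * (-1 : ℝ) ^ k / ((k : ℝ) + 1) = 0 :=
  binomial_sum_eq_zero_general hn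
end

section
/- Let −1 < t ≤ 1. For every integer n ≥ 0, B_n(t)·log(1+t) − A_n(t) = t^{2n+1}·∫_0^1 x^n·(1−x)^n/(1+tx)^{n+1} dx. -/
open Finset

/-- `cₖ(t) = ∑_{m=1}^k (−1)^{m−1} t^m/m`. -/
noncomputable def clog (t : ℝ) (k : ℕ) : ℝ :=
  ∑ m ∈ Icc 1 k, (-1 : ℝ) ^ (m - 1) * t ^ m / m

/-- `Aₙ(t) = ∑_{k=0}^n C(n,k) C(n+k,k) t^{n−k} cₖ(t)`. -/
noncomputable def Alog (t : ℝ) (n : ℕ) : ℝ :=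
  ∑ k ∈ range (n + 1),
    (Nat.choose n k : ℝ) * (Nat.choose (n + k) k : ℝ) * t ^ (n - k) * clog t k

/-!
The polynomial `∑ₖ (-1)ᵏ C(n,k) C(n+k,k) xᵏ` is the shifted Legendre polynomial `Pₙ`. Since
`log (1 + t) - cₖ(t) = (-1)ᵏ t ^ (k + 1) ∫₀¹ x ^ k / (1 + t x) dx`, summing against its coefficients
gives `Bₙ(t) log (1 + t) - Aₙ(t) = t ^ (n + 1) ∫₀¹ Pₙ(x) / (1 + t x) dx`. By Rodrigues' formula,
`n! Pₙ` is the `n`-th derivative of `xⁿ (1 - x)ⁿ`, so `n` integrations by parts, whose boundary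
terms all vanish, move the derivatives onto `1 / (1 + t x)`; this contributes `tⁿ n!`.
-/

section AffineDenominator

open scoped Nat Interval

variable {a b c t : ℝ}

lemma hasDerivAt_inv_affine_pow {𝕜 : Type*} [NontriviallyNormedField 𝕜] {c t x : 𝕜}
    (hx : c + t * x ≠ 0) (m : ℕ) :
    HasDerivAt (fun y ↦ ((c + t * y) ^ m)⁻¹) (-(t * m) / (c + t * x) ^ (m + 1)) x := by
  have haffine : HasDerivAt (fun y ↦ c + t * y) t x := by
    simpa using ((hasDerivAt_id x).const_mul t).const_add c
  refine ((haffine.fun_pow m).fun_inv (pow_ne_zero m hx)).congr_deriv ?_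
  cases m with
  | zero => simp
  | succ m => rw [Nat.add_sub_cancel]; field_simp; ring

lemma integral_deriv_div_affine_pow {f f' : ℝ → ℝ} (hden : ∀ x ∈ [[a, b]], c + t * x ≠ 0)
    (hf : ∀ x ∈ [[a, b]], HasDerivAt f (f' x) x)
    (hf' : IntervalIntegrable f' MeasureTheory.volume a b) (ha : f a = 0) (hb : f b = 0) (m : ℕ) :
    ∫ x in a..b, f' x / (c + t * x) ^ m = t * m * ∫ x in a..b, f x / (c + t * x) ^ (m + 1) := by
  have continuousOn_deriv :
      ContinuousOn (fun x ↦ -(t * m) / (c + t * x) ^ (m + 1)) [[a, b]] :=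
    continuousOn_const.div (by fun_prop) fun x hx ↦ pow_ne_zero _ (hden x hx)
  calc
    ∫ x in a..b, f' x / (c + t * x) ^ m
    _ = ∫ x in a..b, ((c + t * x) ^ m)⁻¹ * f' x := by simp only [div_eq_inv_mul]
    _ = -∫ x in a..b, -(t * m) / (c + t * x) ^ (m + 1) * f x := by
      rw [intervalIntegral.integral_mul_deriv_eq_deriv_mul
        (fun x hx ↦ hasDerivAt_inv_affine_pow (hden x hx) m) hf
        continuousOn_deriv.intervalIntegrable hf', ha, hb]
      ring
    _ = t * m * ∫ x in a..b, f x / (c + t * x) ^ (m + 1) := by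
      rw [← intervalIntegral.integral_neg, ← intervalIntegral.integral_const_mul]
      congr 1 with x
      ring

lemma integral_iteratedDeriv_div_affine (hden : ∀ x ∈ [[a, b]], c + t * x ≠ 0) {n : ℕ}
    {f : ℝ → ℝ} (hf : ContDiff ℝ n f) (ha : ∀ k < n, iteratedDeriv k f a = 0)
    (hb : ∀ k < n, iteratedDeriv k f b = 0) :
    ∫ x in a..b, iteratedDeriv n f x / (c + t * x)
      = t ^ n * n ! * ∫ x in a..b, f x / (c + t * x) ^ (n + 1) := by
  induction n generalizing f with
  | zero => simp
  | succ n ih =>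
    obtain ⟨hdiff, -, hderiv⟩ := contDiff_succ_iff_deriv.1 (by rwa [Nat.cast_succ] at hf)
    have by_parts := integral_deriv_div_affine_pow hden (fun x _ ↦ (hdiff x).hasDerivAt)
      (hderiv.continuous.intervalIntegrable a b) (by simpa using ha 0 n.succ_pos)
      (by simpa using hb 0 n.succ_pos) (n + 1)
    have ha' : ∀ k < n, iteratedDeriv k (deriv f) a = 0 := fun k hk ↦ by
      simpa only [iteratedDeriv_succ'] using ha (k + 1) (by omega)
    have hb' : ∀ k < n, iteratedDeriv k (deriv f) b = 0 := fun k hk ↦ by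
      simpa only [iteratedDeriv_succ'] using hb (k + 1) (by omega)
    rw [iteratedDeriv_succ', ih hderiv ha' hb', by_parts, Nat.factorial_succ]
    push_cast
    ring

lemma intervalIntegrable_pow_div_affine (hden : ∀ x ∈ [[a, b]], c + t * x ≠ 0) (k : ℕ) :
    IntervalIntegrable (fun x ↦ x ^ k / (c + t * x)) MeasureTheory.volume a b :=
  ContinuousOn.intervalIntegrable (.div (by fun_prop) (by fun_prop) hden)

lemma integral_pow_div_affine_succ (hden : ∀ x ∈ [[a, b]], c + t * x ≠ 0) (k : ℕ) :
    t * ∫ x in a..b, x ^ (k + 1) / (c + t * x)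
      = (b ^ (k + 1) - a ^ (k + 1)) / (k + 1) - c * ∫ x in a..b, x ^ k / (c + t * x) := by
  have hint := intervalIntegrable_pow_div_affine hden
  rw [eq_sub_iff_add_eq, ← integral_pow, ← intervalIntegral.integral_const_mul,
    ← intervalIntegral.integral_const_mul,
    ← intervalIntegral.integral_add ((hint (k + 1)).const_mul t) ((hint k).const_mul c)]
  refine intervalIntegral.integral_congr fun x hx ↦ ?_
  have hx0 := hden x hx
  field_simp
  ring

end AffineDenominator

section ShiftedLegendre

open Polynomial
open scoped Nat Interval

variable {𝕜 : Type*} [NontriviallyNormedField 𝕜]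

lemma iteratedDeriv_polynomial_eval (p : 𝕜[X]) (k : ℕ) :
    iteratedDeriv k (fun x ↦ p.eval x) = fun x ↦ (derivative^[k] p).eval x := by
  induction k with
  | zero => simp
  | succ k ih =>
    ext x
    rw [iteratedDeriv_succ, ih, Polynomial.deriv, Function.iterate_succ_apply']

lemma iteratedDeriv_polynomial_eval_eq_zero_of_pow_dvd {p : 𝕜[X]} {a : 𝕜} {n k : ℕ}
    (hp : (X - C a) ^ n ∣ p) (hk : k < n) :
    iteratedDeriv k (fun x ↦ p.eval x) a = 0 := by
  have hdvd : X - C a ∣ derivative^[k] p :=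
    (dvd_pow_self _ (Nat.sub_ne_zero_of_lt hk)).trans
      (pow_sub_dvd_iterate_derivative_of_pow_dvd k hp)
  simpa only [iteratedDeriv_polynomial_eval] using (dvd_iff_isRoot.1 hdvd).eq_zero

lemma factorial_mul_aeval_shiftedLegendre (n : ℕ) (x : 𝕜) :
    n ! * aeval x (shiftedLegendre n)
      = iteratedDeriv n (fun y ↦ (X ^ n * (1 - X) ^ n : 𝕜[X]).eval y) x := by
  rw [iteratedDeriv_polynomial_eval]
  have h := congrArg (aeval x) (factorial_mul_shiftedLegendre_eq n)
  rw [map_mul, map_natCast, ← eval_map_algebraMap (derivative^[n] _), ← iterate_derivative_map] at h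
  simpa using h

lemma integral_shiftedLegendre_div_affine {c t : ℝ} (hden : ∀ x ∈ [[0, 1]], c + t * x ≠ 0)
    (n : ℕ) :
    ∫ x in (0 : ℝ)..1, aeval x (shiftedLegendre n) / (c + t * x)
      = t ^ n * ∫ x in (0 : ℝ)..1, x ^ n * (1 - x) ^ n / (c + t * x) ^ (n + 1) := by
  set Q : ℝ[X] := X ^ n * (1 - X) ^ n
  have X_pow_dvd : (X - C 0) ^ n ∣ Q := by simp [Q]
  have X_sub_one_pow_dvd : (X - C 1) ^ n ∣ Q :=
    (pow_dvd_pow_of_dvd (dvd_sub_comm.1 (by simp)) n).mul_left _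
  apply mul_left_cancel₀ (Nat.cast_ne_zero.2 n.factorial_ne_zero : (n ! : ℝ) ≠ 0)
  calc
    n ! * ∫ x in (0 : ℝ)..1, aeval x (shiftedLegendre n) / (c + t * x)
    _ = ∫ x in (0 : ℝ)..1, iteratedDeriv n (fun y ↦ Q.eval y) x / (c + t * x) := by
      simp only [Q, ← factorial_mul_aeval_shiftedLegendre, mul_div_assoc,
        intervalIntegral.integral_const_mul]
    _ = t ^ n * n ! * ∫ x in (0 : ℝ)..1, Q.eval x / (c + t * x) ^ (n + 1) :=
      integral_iteratedDeriv_div_affine hden (Q.contDiff_aeval n)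
        (fun _ ↦ iteratedDeriv_polynomial_eval_eq_zero_of_pow_dvd X_pow_dvd)
        (fun _ ↦ iteratedDeriv_polynomial_eval_eq_zero_of_pow_dvd X_sub_one_pow_dvd)
    _ = n ! * (t ^ n * ∫ x in (0 : ℝ)..1, x ^ n * (1 - x) ^ n / (c + t * x) ^ (n + 1)) := by
      simp only [Q, eval_mul, eval_pow, eval_X, eval_sub, eval_one]
      ring

end ShiftedLegendre

section LogRemainder

open Polynomial
open scoped Interval

variable {t : ℝ}

lemma one_add_mul_ne_zero_of_mem_uIcc (ht : -1 < t) : ∀ x ∈ [[0, 1]], 1 + t * x ≠ 0 := by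
  intro x hx
  rw [Set.uIcc_of_le zero_le_one] at hx
  apply ne_of_gt
  rcases le_total 0 t with h | h <;> nlinarith [hx.1, hx.2]

lemma log_one_add_eq_mul_integral (ht : -1 < t) :
    Real.log (1 + t) = t * ∫ x in (0 : ℝ)..1, 1 / (1 + t * x) := by
  have comp_affine := intervalIntegral.mul_integral_comp_add_mul (a := 0) (b := 1)
    (f := fun x : ℝ ↦ 1 / x) t 1
  rw [comp_affine, integral_one_div_of_pos (by simp) (by linarith)]
  simp

lemma clog_succ (t : ℝ) (k : ℕ) :
    clog t (k + 1) = clog t k + (-1) ^ k * t ^ (k + 1) / (k + 1) := by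
  rw [clog, sum_Icc_succ_top (by omega), clog]
  simp

lemma log_one_add_sub_clog_eq_integral (ht : -1 < t) (k : ℕ) :
    Real.log (1 + t) - clog t k
      = (-1) ^ k * t ^ (k + 1) * ∫ x in (0 : ℝ)..1, x ^ k / (1 + t * x) := by
  induction k with
  | zero => simpa [clog] using log_one_add_eq_mul_integral ht
  | succ k ih =>
    have moment_succ := integral_pow_div_affine_succ (one_add_mul_ne_zero_of_mem_uIcc ht) k
    simp only [one_pow, zero_pow k.succ_ne_zero, sub_zero, one_mul] at moment_succ
    rw [clog_succ]
    linear_combination ih + (-1) ^ k * t ^ (k + 1) * moment_succ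

lemma sum_coeff_mul_log_sub_clog_eq_integral (ht : -1 < t) {p : ℝ[X]} {n : ℕ}
    (hp : p.natDegree ≤ n) :
    ∑ k ∈ range (n + 1), (-1) ^ k * p.coeff k * t ^ (n - k) * (Real.log (1 + t) - clog t k)
      = t ^ (n + 1) * ∫ x in (0 : ℝ)..1, p.eval x / (1 + t * x) := by
  have hint := intervalIntegrable_pow_div_affine (one_add_mul_ne_zero_of_mem_uIcc ht)
  simp only [eval_eq_sum_range' (Nat.lt_succ_of_le hp), sum_div, mul_div_assoc]
  rw [intervalIntegral.integral_finsetSum fun k _ ↦ (hint k).const_mul _, mul_sum]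
  refine sum_congr rfl fun k hk ↦ ?_
  have pow_split : t ^ (n + 1) = t ^ (n - k) * t ^ (k + 1) := by
    rw [← pow_add, ← add_assoc, Nat.sub_add_cancel (mem_range_succ_iff.1 hk)]
  have sign_sq : (-1 : ℝ) ^ k * (-1) ^ k = 1 := by simp [← mul_pow]
  rw [log_one_add_sub_clog_eq_integral ht, intervalIntegral.integral_const_mul, pow_split]
  linear_combination (p.coeff k * t ^ (n - k) * t ^ (k + 1) *
    ∫ x in (0 : ℝ)..1, x ^ k / (1 + t * x)) * sign_sq

lemma Blog_mul_sub_Alog_eq_sum_shiftedLegendre_coeff (t : ℝ) (n : ℕ) (l : ℝ) :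
    Blog t n * l - Alog t n
      = ∑ k ∈ range (n + 1),
          (-1) ^ k * ((shiftedLegendre n).coeff k : ℝ) * t ^ (n - k) * (l - clog t k) := by
  rw [Blog, Alog, sum_mul, ← sum_sub_distrib]
  refine sum_congr rfl fun k _ ↦ ?_
  have sign_sq : (-1 : ℝ) ^ k * (-1) ^ k = 1 := by simp [← mul_pow]
  rw [coeff_shiftedLegendre, Nat.choose_symm_add]
  push_cast
  linear_combination -((n.choose k : ℝ) * (n + k).choose k * t ^ (n - k) * (l - clog t k)) * sign_sq

lemma Blog_mul_log_sub_Alog_eq_integral_shiftedLegendre (ht : -1 < t) (n : ℕ) :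
    Blog t n * Real.log (1 + t) - Alog t n
      = t ^ (n + 1) * ∫ x in (0 : ℝ)..1, aeval x (shiftedLegendre n) / (1 + t * x) := by
  have hdeg : ((shiftedLegendre n).map (algebraMap ℤ ℝ)).natDegree ≤ n :=
    natDegree_map_le.trans (natDegree_shiftedLegendre n).le
  rw [Blog_mul_sub_Alog_eq_sum_shiftedLegendre_coeff]
  simpa only [coeff_map, eq_intCast, eval_map_algebraMap] using
    sum_coeff_mul_log_sub_clog_eq_integral ht hdeg

end LogRemainder

theorem Blog_mul_log_sub_Alog_eq_integral_general (t : ℝ) (ht : -1 < t) (n : ℕ) :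
    Blog t n * Real.log (1 + t) - Alog t n
      = t ^ (2 * n + 1) * ∫ x in (0:ℝ)..1, x ^ n * (1 - x) ^ n / (1 + t * x) ^ (n + 1) := by
  rw [Blog_mul_log_sub_Alog_eq_integral_shiftedLegendre ht,
    integral_shiftedLegendre_div_affine (one_add_mul_ne_zero_of_mem_uIcc ht)]
  ring

/-- **Integral representation of the approximation error for `log(1+t)`.**
For `−1 < t ≤ 1` and every `n ≥ 0`,
`Bₙ(t) log(1+t) − Aₙ(t) = t^{2n+1} ∫_0^1 xⁿ(1−x)ⁿ/(1+tx)^{n+1} dx`. -/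
theorem Blog_mul_log_sub_Alog_eq_integral (t : ℝ) (ht₁ : -1 < t) (ht₂ : t ≤ 1) (n : ℕ) :
    Blog t n * Real.log (1 + t) - Alog t n
      = t ^ (2 * n + 1) * ∫ x in (0:ℝ)..1, x ^ n * (1 - x) ^ n / (1 + t * x) ^ (n + 1) :=
  Blog_mul_log_sub_Alog_eq_integral_general t ht₁ n
end
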